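/- arXiv:2010.04662 — 2 statements merged into one kernel-verified Lean document; each statement's English description precedes it below -/
import Mathlib

section
/- Let K be a field, let M be a K[x]-submodule of K[x]^{1×n} which is free of rank m, let s ∈ ℤ^n, and let t ∈ ℤ^m be the s-row degree of some s-reduced basis of M, assumed to be nondecreasing. Let B ∈ K[x]^{m×n} be a matrix of rank m all of whose rows lie in M, and let d ∈ ℤ^m be the s-row degree of B sorted in nondecreasing order. If d ≤ t entrywise, then B is a basis of M, B is in s-reduced form, and d = t. -/
open Polynomial Matrix

/-- The degree of a polynomial, viewed in `ℤ ∪ {-∞}`. -/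
noncomputable def degZ {K : Type*} [Field K] (p : K[X]) : WithBot ℤ :=
  p.degree.map fun a : ℕ => (a : ℤ)

/-- The `s`-row degree of a (row) vector of polynomials. -/
noncomputable def rdegRow {K : Type*} [Field K] {ν : Type*} [Fintype ν]
    (s : ν → ℤ) (v : ν → K[X]) : WithBot ℤ :=
  Finset.univ.sup fun j => degZ (v j) + (s j : WithBot ℤ)

/-- The `s`-row degree of a polynomial matrix. -/
noncomputable def rdeg {K : Type*} [Field K] {ι ν : Type*} [Fintype ν]
    (s : ν → ℤ) (P : Matrix ι ν K[X]) : ι → WithBot ℤ :=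
  fun i => rdegRow s (P i)

/-- The `t`-column degree of a polynomial matrix. -/
noncomputable def cdeg {K : Type*} [Field K] {ι ν : Type*} [Fintype ι]
    (t : ι → ℤ) (P : Matrix ι ν K[X]) : ν → WithBot ℤ :=
  fun j => Finset.univ.sup fun i => degZ (P i j) + (t i : WithBot ℤ)

/-- Coefficient of integer degree `d` of a polynomial (0 if `d < 0`). -/
noncomputable def coeffZ {K : Type*} [Field K] (p : K[X]) (d : ℤ) : K :=
  if 0 ≤ d then p.coeff d.toNat else 0

/-- The `s`-leading matrix of a polynomial matrix. -/
noncomputable def lm {K : Type*} [Field K] {ι ν : Type*} [Fintype ν]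
    (s : ν → ℤ) (P : Matrix ι ν K[X]) : Matrix ι ν K :=
  Matrix.of fun i j =>
    (rdeg s P i).recBotCoe 0 fun t => coeffZ (P i j) (t - s j)

/-- `P` is in `s`-reduced form: its `s`-leading matrix has full row rank,
i.e. its rows are linearly independent over `K`. -/
def IsReducedForm {K : Type*} [Field K] {ι ν : Type*} [Fintype ν]
    (s : ν → ℤ) (P : Matrix ι ν K[X]) : Prop :=
  LinearIndependent K fun i => lm s P i

open Classical in
/-- The `s`-pivot index of a row vector: the largest column index where the
`s`-row degree is attained (with a nonzero entry); `⊥` for the zero row. -/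
noncomputable def piv {K : Type*} [Field K] {ν : Type*} [Fintype ν] [LinearOrder ν]
    (s : ν → ℤ) (v : ν → K[X]) : WithBot ν :=
  (Finset.univ.filter fun j => v j ≠ 0 ∧ degZ (v j) + (s j : WithBot ℤ) = rdegRow s v).max

/-- The `s`-pivot degree of a row vector (junk value `0` for the zero row). -/
noncomputable def pivDeg {K : Type*} [Field K] {ν : Type*} [Fintype ν] [LinearOrder ν]
    (s : ν → ℤ) (v : ν → K[X]) : ℕ :=
  ((piv s v).map fun j => (v j).natDegree).unbotD 0

/-- `P` is in `s`-weak Popov form: no zero row and strictly increasing `s`-pivot indices. -/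
def IsWeakPopov {K : Type*} [Field K] {ι ν : Type*} [Fintype ν] [LinearOrder ν] [Preorder ι]
    (s : ν → ℤ) (P : Matrix ι ν K[X]) : Prop :=
  (∀ i, piv s (P i) ≠ ⊥) ∧ StrictMono fun i => piv s (P i)

/-- `P` is in `s`-unordered weak Popov form: no zero row and pairwise distinct
`s`-pivot indices. -/
def IsUWeakPopov {K : Type*} [Field K] {ι ν : Type*} [Fintype ν] [LinearOrder ν]
    (s : ν → ℤ) (P : Matrix ι ν K[X]) : Prop :=
  (∀ i, piv s (P i) ≠ ⊥) ∧ Function.Injective fun i => piv s (P i)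

/-- `P` is in `s`-Popov form: `s`-weak Popov, monic pivots, and each pivot entry
has degree strictly larger than the other entries of its column. -/
def IsPopov {K : Type*} [Field K] {ι ν : Type*} [Fintype ν] [LinearOrder ν] [Preorder ι]
    (s : ν → ℤ) (P : Matrix ι ν K[X]) : Prop :=
  IsWeakPopov s P ∧
    ∀ i (j : ν), piv s (P i) = (j : WithBot ν) →
      (P i j).Monic ∧ ∀ i', i' ≠ i → (P i' j).degree < (P i j).degree

/-- The row space of a polynomial matrix. -/
noncomputable def rowSpace {K : Type*} [Field K] {ι ν : Type*} (P : Matrix ι ν K[X]) :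
    Submodule K[X] (ν → K[X]) :=
  Submodule.span K[X] (Set.range fun i => P i)

/-- The rows of `B` form a basis of the module `M`. -/
def IsBasisOf {K : Type*} [Field K] {ι ν : Type*} (B : Matrix ι ν K[X])
    (M : Submodule K[X] (ν → K[X])) : Prop :=
  LinearIndependent K[X] (fun i => B i) ∧
    Submodule.span K[X] (Set.range fun i => B i) = M

/-- The left kernel of a polynomial matrix. -/
noncomputable def leftKernel {K : Type*} [Field K] {ι ν : Type*} [Fintype ι]
    (F : Matrix ι ν K[X]) : Submodule K[X] (ι → K[X]) :=
  LinearMap.ker F.vecMulLinear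

/-!
Write `B = U * B₀` with `U` square over `K[x]`. Since `B₀` is `s`-reduced, degrees are predictable:
the `t`-row degree of `U` is the `s`-row degree `d` of `B`, and `lm_s(B) = lm_t(U) * lm_s(B₀)`.
A nonvanishing term of `det U ≠ 0` is a permutation `π` with `t i ≤ d (π i)` for all `i`, so
`∑ d ≤ ∑ t` forces `t = d ∘ π`. Then `det U` has degree at most `∑ d - ∑ t = 0`, and its
coefficient of that degree is `det lm_t(U)`. So `det U` is a nonzero constant equal to
`det lm_t(U)`: `U` is unimodular, which makes `B` a basis, and `lm_t(U)` is invertible, which makes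
`B` reduced.
-/

section LinearAlgebra

variable {R : Type*} [CommRing R] {ι κ ν : Type*} [Fintype ι]

theorem linearIndependent_row_mul {A : Matrix κ ι R} {B : Matrix ι ν R}
    (hA : LinearIndependent R A.row) (hB : LinearIndependent R B.row) :
    LinearIndependent R (A * B).row :=
  hA.map' B.vecMulLinear (LinearMap.ker_eq_bot.2 (vecMul_injective_iff.2 hB))

theorem span_row_mul_of_isUnit [DecidableEq ι] {A : Matrix ι ι R} (hA : IsUnit A)
    (B : Matrix ι ν R) :
    Submodule.span R (Set.range (A * B).row) = Submodule.span R (Set.range B.row) := by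
  have hsurj : LinearMap.range A.vecMulLinear = ⊤ :=
    LinearMap.range_eq_top.2 (vecMul_surjective_iff_isUnit.2 hA)
  have hcomp : (A * B).vecMulLinear = B.vecMulLinear ∘ₗ A.vecMulLinear :=
    LinearMap.ext fun w => (vecMul_vecMul w A B).symm
  rw [← range_vecMulLinear, ← range_vecMulLinear, hcomp, LinearMap.range_comp, hsurj,
    Submodule.map_top]

theorem exists_mul_eq_of_row_mem_span {P : Matrix ι ν R} {B : Matrix κ ν R}
    (h : ∀ k, B k ∈ Submodule.span R (Set.range P.row)) : ∃ U : Matrix κ ι R, U * P = B := by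
  choose U hU using fun k => (Submodule.mem_span_range_iff_exists_fun R).1 (h k)
  refine ⟨Matrix.of U, funext fun k => ?_⟩
  rw [mul_apply_eq_vecMul, vecMul_eq_sum]
  exact hU k

theorem det_ne_zero_of_rank_eq_card [IsDomain R] [DecidableEq ι] {A : Matrix ι ι R}
    (hA : A.rank = Fintype.card ι) : A.det ≠ 0 := by
  intro hdet
  obtain ⟨v, hv, hAv⟩ := exists_mulVec_eq_zero_iff.2 hdet
  let N := Submodule.span R (Set.range fun _ : Unit => v)
  have hN : Module.finrank R N = 1 := finrank_span_eq_card (linearIndependent_unique_iff.2 hv)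
  have hNker : N ≤ LinearMap.ker A.mulVecLin :=
    Submodule.span_le.2 (Set.range_subset_iff.2 fun _ => hAv)
  have hrank : A.rank ≤ Module.finrank R ((ι → R) ⧸ N) := by
    rw [Matrix.rank, ← Submodule.range_liftQ N A.mulVecLin hNker]
    exact LinearMap.finrank_range_le _
  have hquot := Submodule.finrank_quotient_add_finrank N
  rw [Module.finrank_pi] at hquot
  omega

end LinearAlgebra

section IntegerDegree

variable {K : Type*} [Field K] {ι : Type*} {p q : K[X]} {a b : ℤ}

theorem coeffZ_natCast (p : K[X]) (k : ℕ) : coeffZ p k = p.coeff k := by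
  simp [coeffZ]

theorem coeffZ_zero (a : ℤ) : coeffZ (0 : K[X]) a = 0 := by
  simp [coeffZ]

theorem coeffZ_zsmul (z : ℤ) (p : K[X]) (a : ℤ) : coeffZ (z • p) a = z • coeffZ p a := by
  unfold coeffZ
  split_ifs <;> simp

theorem coeffZ_sum (S : Finset ι) (p : ι → K[X]) (a : ℤ) :
    coeffZ (∑ i ∈ S, p i) a = ∑ i ∈ S, coeffZ (p i) a := by
  unfold coeffZ
  split_ifs <;> simp

theorem degZ_eq_bot_iff : degZ p = ⊥ ↔ p = 0 := by
  rw [degZ, WithBot.map_eq_bot_iff, degree_eq_bot]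

theorem degZ_eq_natDegree (hp : p ≠ 0) : degZ p = (p.natDegree : ℤ) := by
  rw [degZ, degree_eq_natDegree hp]
  rfl

theorem eq_zero_of_degZ_le_of_neg (h : degZ p ≤ a) (ha : a < 0) : p = 0 := by
  by_contra hp
  rw [degZ_eq_natDegree hp, WithBot.coe_le_coe] at h
  omega

theorem natDegree_le_of_degZ_le {k : ℕ} (h : degZ p ≤ (k : ℤ)) : p.natDegree ≤ k := by
  rcases eq_or_ne p 0 with rfl | hp
  · simp
  · rwa [degZ_eq_natDegree hp, WithBot.coe_le_coe, Nat.cast_le] at h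

theorem coeffZ_eq_zero_of_degZ_lt (h : degZ p < a) : coeffZ p a = 0 := by
  rcases eq_or_ne p 0 with rfl | hp
  · exact coeffZ_zero a
  rw [degZ_eq_natDegree hp, WithBot.coe_lt_coe] at h
  lift a to ℕ using by omega
  rw [coeffZ_natCast]
  exact coeff_eq_zero_of_natDegree_lt (by exact_mod_cast h)

theorem coeffZ_ne_zero_of_degZ_eq (h : degZ p = a) : coeffZ p a ≠ 0 := by
  have hp : p ≠ 0 := fun hp => by simp [degZ_eq_bot_iff.2 hp] at h
  rw [degZ_eq_natDegree hp, WithBot.coe_inj] at h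
  rwa [← h, coeffZ_natCast, coeff_natDegree, leadingCoeff_ne_zero]

theorem degZ_lt_iff_coeffZ_eq_zero_of_le (h : degZ p ≤ a) : degZ p < a ↔ coeffZ p a = 0 :=
  ⟨coeffZ_eq_zero_of_degZ_lt, fun h0 => h.lt_of_ne fun heq => coeffZ_ne_zero_of_degZ_eq heq h0⟩

theorem degZ_sum_le {S : Finset ι} {p : ι → K[X]} (h : ∀ i ∈ S, degZ (p i) ≤ a) :
    degZ (∑ i ∈ S, p i) ≤ a := by
  by_contra! hlt
  obtain ⟨b, hb⟩ := WithBot.ne_bot_iff_exists.1 hlt.ne_bot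
  refine coeffZ_ne_zero_of_degZ_eq hb.symm ?_
  rw [coeffZ_sum]
  exact Finset.sum_eq_zero fun i hi =>
    coeffZ_eq_zero_of_degZ_lt (((h i hi).trans_lt hlt).trans_eq hb.symm)

theorem degZ_mul (p q : K[X]) : degZ (p * q) = degZ p + degZ q := by
  rw [degZ, degree_mul]
  exact WithBot.map_add (Nat.castAddMonoidHom ℤ) _ _

theorem coeffZ_mul_add (hp : degZ p ≤ a) (hq : degZ q ≤ b) :
    coeffZ (p * q) (a + b) = coeffZ p a * coeffZ q b := by
  rcases lt_or_ge a 0 with ha | ha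
  · simp [eq_zero_of_degZ_le_of_neg hp ha, coeffZ_zero]
  rcases lt_or_ge b 0 with hb | hb
  · simp [eq_zero_of_degZ_le_of_neg hq hb, coeffZ_zero]
  lift a to ℕ using ha
  lift b to ℕ using hb
  simpa only [← Nat.cast_add, coeffZ_natCast] using
    coeff_mul_add_eq_of_natDegree_le (natDegree_le_of_degZ_le hp) (natDegree_le_of_degZ_le hq)

theorem degZ_prod_le {S : Finset ι} {p : ι → K[X]} {a : ι → ℤ} (h : ∀ i ∈ S, degZ (p i) ≤ a i) :
    degZ (∏ i ∈ S, p i) ≤ ((∑ i ∈ S, a i : ℤ) : WithBot ℤ) := by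
  classical
  induction S using Finset.induction_on with
  | empty => simp [degZ]
  | insert i S hi ih =>
    rw [Finset.prod_insert hi, Finset.sum_insert hi, degZ_mul, WithBot.coe_add]
    exact add_le_add (h i (S.mem_insert_self i)) (ih fun j hj => h j (S.mem_insert_of_mem hj))

theorem coeffZ_prod_sum {S : Finset ι} {p : ι → K[X]} {a : ι → ℤ}
    (h : ∀ i ∈ S, degZ (p i) ≤ a i) :
    coeffZ (∏ i ∈ S, p i) (∑ i ∈ S, a i) = ∏ i ∈ S, coeffZ (p i) (a i) := by
  classical
  induction S using Finset.induction_on with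
  | empty => simp [coeffZ]
  | insert i S hi ih =>
    have hS : ∀ j ∈ S, degZ (p j) ≤ a j := fun j hj => h j (S.mem_insert_of_mem hj)
    rw [Finset.prod_insert hi, Finset.sum_insert hi, Finset.prod_insert hi, ← ih hS]
    exact coeffZ_mul_add (h i (S.mem_insert_self i)) (degZ_prod_le hS)

end IntegerDegree

section RowDegree

variable {K : Type*} [Field K] {ι κ ν : Type*} [Fintype ν] {s : ν → ℤ}

theorem rdegRow_eq_bot_iff {v : ν → K[X]} : rdegRow s v = ⊥ ↔ v = 0 := by
  simp [rdegRow, Finset.sup_eq_bot_iff, WithBot.add_eq_bot, degZ_eq_bot_iff, funext_iff]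

theorem rdegRow_le_coe_iff {v : ν → K[X]} {c : ℤ} :
    rdegRow s v ≤ c ↔ ∀ j, degZ (v j) ≤ (c - s j : ℤ) := by
  have hshift (x : WithBot ℤ) (a : ℤ) : x + a ≤ c ↔ x ≤ (c - a : ℤ) := by
    cases x with
    | bot => simp
    | coe b => rw [← WithBot.coe_add, WithBot.coe_le_coe, WithBot.coe_le_coe, le_sub_iff_add_le]
  simp only [rdegRow, Finset.sup_le_iff, Finset.mem_univ, forall_const, hshift]

theorem rdegRow_lt_coe_iff {v : ν → K[X]} {c : ℤ} :
    rdegRow s v < c ↔ ∀ j, degZ (v j) < (c - s j : ℤ) := by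
  have hshift (x : WithBot ℤ) (a : ℤ) : x + a < c ↔ x < (c - a : ℤ) := by
    cases x with
    | bot => simp
    | coe b => rw [← WithBot.coe_add, WithBot.coe_lt_coe, WithBot.coe_lt_coe, lt_sub_iff_add_lt]
  simp only [rdegRow, Finset.sup_lt_iff (WithBot.bot_lt_coe c), Finset.mem_univ, forall_const,
    hshift]

theorem rdegRow_lt_iff_coeffZ_eq_zero_of_le {v : ν → K[X]} {c : ℤ} (h : rdegRow s v ≤ c) :
    rdegRow s v < c ↔ ∀ j, coeffZ (v j) (c - s j) = 0 :=
  rdegRow_lt_coe_iff.trans <|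
    forall_congr' fun j => degZ_lt_iff_coeffZ_eq_zero_of_le (rdegRow_le_coe_iff.1 h j)

theorem lm_apply_of_rdeg_eq_coe {P : Matrix ι ν K[X]} {i : ι} {c : ℤ} (h : rdeg s P i = c)
    (j : ν) : lm s P i j = coeffZ (P i j) (c - s j) := by
  simp [lm, h]

theorem lm_row_eq_zero_iff {P : Matrix ι ν K[X]} {i : ι} : lm s P i = 0 ↔ rdeg s P i = ⊥ := by
  cases h : rdeg s P i with
  | bot => exact iff_of_true (funext fun j => by simp [lm, h]) rfl
  | coe c =>
    refine iff_of_false (fun h0 => ?_) WithBot.coe_ne_bot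
    refine ((rdegRow_lt_iff_coeffZ_eq_zero_of_le h.le).2 fun j => ?_).ne h
    rw [← lm_apply_of_rdeg_eq_coe h, h0, Pi.zero_apply]

variable [Fintype ι] {t : ι → ℤ} {U : Matrix κ ι K[X]} {P : Matrix ι ν K[X]}

theorem rdeg_mul_le (hP : ∀ i, rdeg s P i ≤ t i) (k : κ) : rdeg s (U * P) k ≤ rdeg t U k := by
  cases hU : rdeg t U k with
  | bot =>
    refine (rdegRow_eq_bot_iff.2 ?_).le
    rw [mul_apply_eq_vecMul, rdegRow_eq_bot_iff.1 hU, zero_vecMul]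
  | coe c =>
    refine rdegRow_le_coe_iff.2 fun j => degZ_sum_le fun i _ => ?_
    have hUi : degZ (U k i) ≤ (c - t i : ℤ) := rdegRow_le_coe_iff.1 hU.le i
    have hPj : degZ (P i j) ≤ (t i - s j : ℤ) := rdegRow_le_coe_iff.1 (hP i) j
    rw [degZ_mul, ← sub_add_sub_cancel c (t i) (s j), WithBot.coe_add]
    exact add_le_add hUi hPj

theorem coeffZ_mul_apply (hP : ∀ i, rdeg s P i = t i) {k : κ} {c : ℤ} (hU : rdeg t U k = c)
    (j : ν) : coeffZ ((U * P) k j) (c - s j) = (lm t U * lm s P) k j := by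
  simp only [mul_apply, coeffZ_sum]
  refine Finset.sum_congr rfl fun i _ => ?_
  rw [lm_apply_of_rdeg_eq_coe hU, lm_apply_of_rdeg_eq_coe (hP i),
    ← coeffZ_mul_add (rdegRow_le_coe_iff.1 hU.le i) (rdegRow_le_coe_iff.1 (hP i).le j),
    sub_add_sub_cancel]

/-- The predictable degree property. -/
theorem IsReducedForm.rdeg_mul (hred : IsReducedForm s P) (hP : ∀ i, rdeg s P i = t i)
    (U : Matrix κ ι K[X]) : rdeg s (U * P) = rdeg t U := by
  funext k
  have hle := rdeg_mul_le (U := U) (fun i => (hP i).le) k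
  cases hU : rdeg t U k with
  | bot => exact le_bot_iff.1 (hU ▸ hle)
  | coe c =>
    rw [hU] at hle
    refine hle.eq_of_not_lt fun hlt => ?_
    have hzero : lm t U k ᵥ* lm s P = 0 ᵥ* lm s P := by
      funext j
      rw [zero_vecMul, ← mul_apply_eq_vecMul, ← coeffZ_mul_apply hP hU]
      exact (rdegRow_lt_iff_coeffZ_eq_zero_of_le hle).1 hlt j
    have hrow : lm t U k = 0 := vecMul_injective_iff.2 hred hzero
    simp [lm_row_eq_zero_iff.1 hrow] at hU

theorem IsReducedForm.lm_mul (hred : IsReducedForm s P) (hP : ∀ i, rdeg s P i = t i)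
    (U : Matrix κ ι K[X]) : lm s (U * P) = lm t U * lm s P := by
  funext k
  have hdeg : rdeg s (U * P) k = rdeg t U k := congrFun (hred.rdeg_mul hP U) k
  cases hU : rdeg t U k with
  | bot =>
    rw [mul_apply_eq_vecMul, lm_row_eq_zero_iff.2 hU, zero_vecMul,
      lm_row_eq_zero_iff.2 (hdeg.trans hU)]
  | coe c =>
    funext j
    rw [lm_apply_of_rdeg_eq_coe (hdeg.trans hU), coeffZ_mul_apply hP hU]

theorem IsReducedForm.mul (hred : IsReducedForm s P) (hP : ∀ i, rdeg s P i = t i)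
    (hU : IsReducedForm t U) : IsReducedForm s (U * P) := by
  rw [IsReducedForm, hred.lm_mul hP U]
  exact linearIndependent_row_mul hU hred

end RowDegree

section Determinant

variable {K : Type*} [Field K] {ι : Type*} [Fintype ι] {d t : ι → ℤ} {U : Matrix ι ι K[X]}

theorem degZ_prod_perm_le (hU : ∀ i, rdeg t U i ≤ d i) (π : Equiv.Perm ι) :
    degZ (∏ i, U (π i) i) ≤ ((∑ i, d i - ∑ i, t i : ℤ) : WithBot ℤ) := by
  rw [← Equiv.sum_comp π d, ← Finset.sum_sub_distrib]
  exact degZ_prod_le fun i _ => rdegRow_le_coe_iff.1 (hU (π i)) i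

theorem coeffZ_prod_perm (hU : ∀ i, rdeg t U i = d i) (π : Equiv.Perm ι) :
    coeffZ (∏ i, U (π i) i) (∑ i, d i - ∑ i, t i) = ∏ i, lm t U (π i) i := by
  rw [← Equiv.sum_comp π d, ← Finset.sum_sub_distrib,
    coeffZ_prod_sum fun i _ => rdegRow_le_coe_iff.1 (hU (π i)).le i]
  exact Finset.prod_congr rfl fun i _ => (lm_apply_of_rdeg_eq_coe (hU (π i)) i).symm

variable [DecidableEq ι]

theorem degZ_det_le (hU : ∀ i, rdeg t U i ≤ d i) :
    degZ U.det ≤ ((∑ i, d i - ∑ i, t i : ℤ) : WithBot ℤ) := by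
  rw [det_apply]
  refine degZ_sum_le fun π _ => ?_
  rcases Int.units_eq_one_or (Equiv.Perm.sign π) with h | h
  · simpa [h] using degZ_prod_perm_le hU π
  · simpa [h, degZ] using degZ_prod_perm_le hU π

theorem coeffZ_det (hU : ∀ i, rdeg t U i = d i) :
    coeffZ U.det (∑ i, d i - ∑ i, t i) = (lm t U).det := by
  simp only [det_apply, coeffZ_sum, Units.smul_def, coeffZ_zsmul, coeffZ_prod_perm hU]

theorem det_eq_C_det_lm (hU : ∀ i, rdeg t U i = d i) (hsum : ∑ i, d i = ∑ i, t i) :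
    U.det = C (lm t U).det := by
  have hdeg : degZ U.det ≤ ((0 : ℕ) : ℤ) := by
    simpa [hsum] using degZ_det_le fun i => (hU i).le
  have hcoeff : U.det.coeff 0 = (lm t U).det := by
    rw [← coeffZ_det hU, hsum, sub_self]
    exact (coeffZ_natCast U.det 0).symm
  rw [eq_C_of_natDegree_le_zero (natDegree_le_of_degZ_le hdeg), hcoeff]

theorem exists_perm_le_of_det_ne_zero (hU : ∀ i, rdeg t U i ≤ d i) (hdet : U.det ≠ 0) :
    ∃ π : Equiv.Perm ι, ∀ i, t i ≤ d (π i) := by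
  rw [det_apply'] at hdet
  obtain ⟨π, -, hπ⟩ := Finset.exists_ne_zero_of_sum_ne_zero hdet
  refine ⟨π, fun i => ?_⟩
  by_contra! hlt
  have hzero : U (π i) i = 0 :=
    eq_zero_of_degZ_le_of_neg (rdegRow_le_coe_iff.1 (hU (π i)) i) (sub_neg.2 hlt)
  exact right_ne_zero_of_mul hπ (Finset.prod_eq_zero (Finset.mem_univ i) hzero)

theorem exists_perm_comp_eq_of_det_ne_zero (hU : ∀ i, rdeg t U i ≤ d i) (hdet : U.det ≠ 0)
    (hsum : ∑ i, d i ≤ ∑ i, t i) : ∃ π : Equiv.Perm ι, d ∘ π = t := by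
  obtain ⟨π, hπ⟩ := exists_perm_le_of_det_ne_zero hU hdet
  have hge : ∑ i, t i ≤ ∑ i, d (π i) := Finset.sum_le_sum fun i _ => hπ i
  have heq : ∑ i, t i = ∑ i, d (π i) := hge.antisymm ((Equiv.sum_comp π d).trans_le hsum)
  exact ⟨π, funext fun i =>
    ((Finset.sum_eq_sum_iff_of_le fun i _ => hπ i).1 heq i (Finset.mem_univ i)).symm⟩

end Determinant

theorem IsBasisOf.mul_of_isUnit {K : Type*} [Field K] {ι ν : Type*} [Fintype ι] [DecidableEq ι]
    {P : Matrix ι ν K[X]} {M : Submodule K[X] (ν → K[X])} {U : Matrix ι ι K[X]}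
    (hP : IsBasisOf P M) (hU : IsUnit U) : IsBasisOf (U * P) M :=
  ⟨linearIndependent_row_mul (vecMul_injective_iff.1 (vecMul_injective_of_isUnit hU)) hP.1,
    (span_row_mul_of_isUnit hU P).trans hP.2⟩

theorem minimality_implies_basis_general {K : Type*} [Field K] {ι ν : Type*} [Fintype ι]
    [Fintype ν] (M : Submodule K[X] (ν → K[X])) (s : ν → ℤ) (t : ι → ℤ) (B₀ : Matrix ι ν K[X])
    (hB₀ : IsBasisOf B₀ M) (hB₀red : IsReducedForm s B₀) (hB₀deg : ∀ i, rdeg s B₀ i = t i)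
    (B : Matrix ι ν K[X]) (hrank : B.rank = Fintype.card ι) (hrows : ∀ i, B i ∈ M)
    (d : ι → ℤ) (hBdeg : ∀ i, rdeg s B i = d i) (hsum : ∑ i, d i ≤ ∑ i, t i) :
    IsBasisOf B M ∧ IsReducedForm s B ∧ ∃ π : Equiv.Perm ι, d ∘ π = t := by
  classical
  obtain ⟨U, rfl⟩ : ∃ U : Matrix ι ι K[X], U * B₀ = B :=
    exists_mul_eq_of_row_mem_span fun i => hB₀.2 ▸ hrows i
  have hUdeg : ∀ i, rdeg t U i = d i := by simpa only [hB₀red.rdeg_mul hB₀deg] using hBdeg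
  have hUdet : U.det ≠ 0 := det_ne_zero_of_rank_eq_card <|
    (rank_le_card_width U).antisymm (hrank.symm.trans_le (rank_mul_le_left U B₀))
  obtain ⟨π, hπ⟩ := exists_perm_comp_eq_of_det_ne_zero (fun i => (hUdeg i).le) hUdet hsum
  have hdet : U.det = C (lm t U).det :=
    det_eq_C_det_lm hUdeg (hπ ▸ (Equiv.sum_comp π d).symm)
  have hlmdet : (lm t U).det ≠ 0 := fun h => hUdet (by rw [hdet, h, C_0])
  have hUunit : IsUnit U := by
    rw [isUnit_iff_isUnit_det, hdet, isUnit_C]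
    exact hlmdet.isUnit
  have hUred : IsReducedForm t U := linearIndependent_rows_of_det_ne_zero hlmdet
  exact ⟨hB₀.mul_of_isUnit hUunit, hB₀red.mul hB₀deg hUred, π, hπ⟩

/-- minimality implies basis: if a rank-`m` submodule `M` of
`K[x]^{1×n}` has an `s`-reduced basis of nondecreasing `s`-row degree `t`, and
`B` is a rank-`m` matrix with rows in `M` whose sorted `s`-row degree `d`
satisfies `d ≤ t`, then `B` is an `s`-reduced basis of `M` and `d = t`. -/
theorem minimality_implies_basis {K : Type*} [Field K] {m n : ℕ}
    (M : Submodule K[X] (Fin n → K[X])) (s : Fin n → ℤ)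
    (t : Fin m → ℤ) (htmono : Monotone t)
    (B₀ : Matrix (Fin m) (Fin n) K[X])
    (hB₀ : IsBasisOf B₀ M) (hB₀red : IsReducedForm s B₀)
    (hB₀deg : ∀ i, rdeg s B₀ i = ((t i : ℤ) : WithBot ℤ))
    (B : Matrix (Fin m) (Fin n) K[X])
    (hrank : B.rank = m)
    (hrows : ∀ i, B i ∈ M)
    (d : Fin m → ℤ) (hdmono : Monotone d)
    (σ : Equiv.Perm (Fin m)) (hσ : ∀ i, rdeg s B (σ i) = ((d i : ℤ) : WithBot ℤ))
    (hdt : ∀ i, d i ≤ t i) :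
    IsBasisOf B M ∧ IsReducedForm s B ∧ d = t := by
  have hBdeg (i : Fin m) : rdeg s B i = ((d ∘ σ.symm) i : WithBot ℤ) := by simp [← hσ]
  have hsum : ∑ i, (d ∘ σ.symm) i ≤ ∑ i, t i :=
    (Equiv.sum_comp σ.symm d).trans_le (Finset.sum_le_sum fun i _ => hdt i)
  obtain ⟨hbasis, hred, π, hπ⟩ := minimality_implies_basis_general M s t B₀ hB₀ hB₀red hB₀deg B
    (hrank.trans (Fintype.card_fin m).symm) hrows (d ∘ σ.symm) hBdeg hsum
  exact ⟨hbasis, hred,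
    (Tuple.unique_monotone (σ := 1) (τ := σ.symm * π) hdmono (hπ ▸ htmono)).trans hπ⟩
end

section
/- Let K be a field, v ∈ ℤ^n, let K ∈ K[x]^{n×n} be in v-weak Popov form, and let d = rdeg_v(K) ∈ ℤ^n. Let J denote the n×n reversal matrix (ones on the antidiagonal, zeros elsewhere), and let dJ = (d_n,…,d_1) denote the reversed tuple. Then J K^T J is in (−dJ)-weak Popov form. -/
open Polynomial Matrix

/-!
Moving shifts across an inequality gives
`deg M_{ij} + v_j ≤ d_i ↔ deg M_{ij} - d_i ≤ -v_j`, and likewise for `=` and `<`. So the degree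
profile of `M` for the shift `v` is read along columns as the profile of `Mᵀ` for the shift `-d`,
with the same pivot entries; only the side on which the inequality is strict is swapped, and
reversing the order of rows and columns swaps it back. For a square `M` in weak Popov form the pivot
entries are the diagonal ones, since a strictly monotone self-map of a finite linear order is the
identity.
-/

theorem finset_max_eq_coe_iff_isGreatest {α : Type*} [LinearOrder α] {s : Finset α} {a : α} :
    s.max = a ↔ IsGreatest (s : Set α) a := by
  refine ⟨fun h => ⟨Finset.mem_of_max h, fun b hb => Finset.le_max_of_eq hb h⟩, fun h => ?_⟩
  exact le_antisymm (Finset.max_le fun b hb => WithBot.coe_le_coe.2 (h.2 hb)) (Finset.le_max h.1)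

section Shift

variable {G : Type*} [AddCommGroup G] [PartialOrder G] [IsOrderedAddMonoid G] {a : WithBot G}
  {b c : G}

theorem withBot_add_neg_le_neg_iff : a + ↑(-c) ≤ ↑(-b) ↔ a + ↑b ≤ ↑c := by
  cases a with
  | bot => simp
  | coe a => rw [← WithBot.coe_add, ← WithBot.coe_add, WithBot.coe_le_coe, WithBot.coe_le_coe,
      ← sub_eq_add_neg, sub_le_iff_le_add, neg_add_eq_sub, le_sub_iff_add_le]

theorem withBot_add_neg_lt_neg_iff : a + ↑(-c) < ↑(-b) ↔ a + ↑b < ↑c := by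
  cases a with
  | bot => simp
  | coe a => rw [← WithBot.coe_add, ← WithBot.coe_add, WithBot.coe_lt_coe, WithBot.coe_lt_coe,
      ← sub_eq_add_neg, sub_lt_iff_lt_add, neg_add_eq_sub, lt_sub_iff_add_lt]

theorem withBot_add_neg_eq_neg_iff : a + ↑(-c) = ↑(-b) ↔ a + ↑b = ↑c := by
  simp only [eq_iff_le_not_lt, withBot_add_neg_le_neg_iff, withBot_add_neg_lt_neg_iff]

end Shift

section Pivot

variable {K : Type*} [Field K] {ι κ ν : Type*} [Fintype ν] [LinearOrder ν]

@[simp]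
theorem degZ_zero : degZ (0 : K[X]) = ⊥ := by
  simp [degZ]

theorem piv_eq_coe_iff_isGreatest {s : ν → ℤ} {w : ν → K[X]} {j : ν} :
    piv s w = j ↔ IsGreatest {k | w k ≠ 0 ∧ degZ (w k) + s k = rdegRow s w} j := by
  rw [piv, finset_max_eq_coe_iff_isGreatest, Finset.coe_filter_univ]

theorem rdegRow_eq_and_piv_eq_iff {s : ν → ℤ} {w : ν → K[X]} {r : ℤ} {j : ν} :
    rdegRow s w = r ∧ piv s w = j ↔
      (∀ k, degZ (w k) + s k ≤ r) ∧ degZ (w j) + s j = r ∧ ∀ k, j < k → degZ (w k) + s k < r := by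
  have rdegRow_le : rdegRow s w ≤ r ↔ ∀ k, degZ (w k) + s k ≤ r := by simp [rdegRow]
  have ne_zero_of_eq {k : ν} (h : degZ (w k) + s k = r) : w k ≠ 0 := by
    intro hk
    simp [hk] at h
  rw [piv_eq_coe_iff_isGreatest]
  constructor
  · rintro ⟨hr, ⟨-, hj⟩, hmax⟩
    rw [hr] at hj hmax
    have hle := rdegRow_le.1 hr.le
    refine ⟨hle, hj, fun k hjk => (hle k).lt_of_ne fun hk => ?_⟩
    exact hjk.not_ge (hmax ⟨ne_zero_of_eq hk, hk⟩)
  · rintro ⟨hle, hj, hlt⟩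
    have hr : rdegRow s w = r := by
      refine (rdegRow_le.2 hle).antisymm (hj.symm.trans_le ?_)
      exact Finset.le_sup (f := fun k => degZ (w k) + (s k : WithBot ℤ)) (Finset.mem_univ j)
    rw [hr]
    exact ⟨rfl, ⟨ne_zero_of_eq hj, hj⟩, fun k hk => le_of_not_gt fun hjk => (hlt k hjk).ne hk.2⟩

theorem isWeakPopov_iff_exists_strictMono [Preorder ι] {s : ν → ℤ} {P : Matrix ι ν K[X]} :
    IsWeakPopov s P ↔ ∃ p : ι → ν, StrictMono p ∧ ∀ i, piv s (P i) = p i := by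
  constructor
  · rintro ⟨hne, hmono⟩
    choose p hp using fun i => WithBot.ne_bot_iff_exists.1 (hne i)
    exact ⟨p, fun i k hik => by simpa [← hp] using hmono hik, fun i => (hp i).symm⟩
  · rintro ⟨p, hmono, hp⟩
    exact ⟨by simp [hp], fun i k hik => by simpa [hp] using hmono hik⟩

theorem IsWeakPopov.piv_eq_self {s : ν → ℤ} {P : Matrix ν ν K[X]} (hP : IsWeakPopov s P) (i : ν) :
    piv s (P i) = i := by
  obtain ⟨p, hmono, hp⟩ := isWeakPopov_iff_exists_strictMono.1 hP
  rw [hp, hmono.apply_le.antisymm hmono.le_apply]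

theorem rev_transpose_rev_weakPopov_general [Preorder ι] [Fintype κ] [LinearOrder κ]
    {v : ν → ℤ} {M : Matrix ι ν K[X]} (hM : IsWeakPopov v M)
    {d : ι → ℤ} (hd : ∀ i, rdeg v M i = d i) {p : ι → ν} (hp : ∀ i, piv v (M i) = p i)
    {σ : κ → ι} (hσ : StrictAnti σ) :
    IsWeakPopov (fun i => -d (σ i)) (M.submatrix σ (p ∘ σ))ᵀ := by
  have hp_mono : StrictMono p := fun i k hik => by simpa [hp] using hM.2 hik
  have hM_profile i := rdegRow_eq_and_piv_eq_iff.1 ⟨hd i, hp i⟩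
  refine isWeakPopov_iff_exists_strictMono.2 ⟨id, strictMono_id, fun i => ?_⟩
  refine (rdegRow_eq_and_piv_eq_iff (r := -v (p (σ i))).2 ⟨fun k => ?_, ?_, fun k hik => ?_⟩).2
  · exact withBot_add_neg_le_neg_iff.2 ((hM_profile (σ k)).1 _)
  · exact withBot_add_neg_eq_neg_iff.2 (hM_profile (σ i)).2.1
  · exact withBot_add_neg_lt_neg_iff.2 ((hM_profile (σ k)).2.2 _ (hp_mono (hσ hik)))

end Pivot

/-- Lemma 3.2 (c): if `M` is in `v`-weak Popov form with
`d = rdeg_v(M)`, then `J Mᵀ J` is in `(−dJ)`-weak Popov form, where `J` is the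
reversal matrix and `dJ` the reversed tuple. -/
theorem rev_transpose_rev_weakPopov {K : Type*} [Field K] {n : ℕ}
    (v : Fin n → ℤ) (M : Matrix (Fin n) (Fin n) K[X]) (hM : IsWeakPopov v M)
    (d : Fin n → ℤ) (hd : ∀ i, rdeg v M i = ((d i : ℤ) : WithBot ℤ)) :
    IsWeakPopov (fun i => -d (Fin.rev i))
      (Matrix.of fun i j => M (Fin.rev j) (Fin.rev i)) := by
  exact rev_transpose_rev_weakPopov_general hM hd hM.piv_eq_self Fin.rev_strictAnti
end
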